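/- Fix a central charge Z : ℤ² → ℂ with φ(1,0) < φ(0,1). A nonzero representation of the barbell quiver with potential is stable if and only if it is isomorphic to the simple representation S₁ = (ℂ, 0, 0, 0, 0) at vertex 1 or to the simple representation S₂ = (0, ℂ, 0, 0, 0) at vertex 2. -/

import Mathlib

/-!
# Statement 12

Work over `ℂ`.  The barbell quiver has vertices `1` and `2`, a loop `a` at vertex `1`, a loop
`b` at vertex `2`, and an arrow `c : 1 → 2`; its potential is `W = a³ + b³`, whose Jacobian
relations are `a² = 0` and `b² = 0`.  Fix a central charge `Z : ℤ² → ℂ` with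
`φ(1,0) < φ(0,1)`.  A nonzero representation of the barbell quiver with potential is stable
if and only if it is isomorphic to the simple representation `S₁ = (ℂ, 0, 0, 0, 0)` at vertex
`1` or to the simple representation `S₂ = (0, ℂ, 0, 0, 0)` at vertex `2`.
-/

noncomputable section
open Module

/-- The set `ℍ = {r·exp(iπφ) : r > 0, 0 < φ ≤ 1} ⊆ ℂ`. -/
def UpperH : Set ℂ :=
  {z | ∃ r φ : ℝ, 0 < r ∧ 0 < φ ∧ φ ≤ 1 ∧ z = (r : ℂ) * Complex.exp ((Real.pi * φ : ℝ) * Complex.I)}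

/-- The phase `φ ∈ (0, 1]` of a complex number `z ∈ ℍ`: if `z = r·exp(iπφ)` with `r > 0` and
`0 < φ ≤ 1`, then `Complex.arg z = π·φ`, so that `phase z = φ` is the unique `φ ∈ (0,1]` with
`z ∈ ℝ_{>0}·exp(iπφ)`. -/
def phase (z : ℂ) : ℝ := Complex.arg z / Real.pi

/-- A representation of the barbell quiver with potential `W = a³ + b³`: finite-dimensional
`ℂ`-vector spaces `V1, V2` and linear maps `fa : V1 → V1`, `fb : V2 → V2`, `fc : V1 → V2`
satisfying the Jacobian relations `fa ∘ fa = 0` and `fb ∘ fb = 0`. -/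
structure BarbellRep where
  V1 : Type
  V2 : Type
  [acg1 : AddCommGroup V1]
  [acg2 : AddCommGroup V2]
  [mod1 : Module ℂ V1]
  [mod2 : Module ℂ V2]
  [fd1 : FiniteDimensional ℂ V1]
  [fd2 : FiniteDimensional ℂ V2]
  fa : V1 →ₗ[ℂ] V1
  fb : V2 →ₗ[ℂ] V2
  fc : V1 →ₗ[ℂ] V2
  rel_a : fa ∘ₗ fa = 0
  rel_b : fb ∘ₗ fb = 0

attribute [instance] BarbellRep.acg1 BarbellRep.acg2 BarbellRep.mod1 BarbellRep.mod2
  BarbellRep.fd1 BarbellRep.fd2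

namespace BarbellRep

/-- The dimension vector `(dim V1, dim V2)`. -/
def dimVec (M : BarbellRep) : ℕ × ℕ := (finrank ℂ M.V1, finrank ℂ M.V2)

/-- A subrepresentation: a pair of submodules closed under the structure maps. -/
structure Sub (M : BarbellRep) where
  S1 : Submodule ℂ M.V1
  S2 : Submodule ℂ M.V2
  mapsto_a : ∀ x ∈ S1, M.fa x ∈ S1
  mapsto_b : ∀ y ∈ S2, M.fb y ∈ S2
  mapsto_c : ∀ x ∈ S1, M.fc x ∈ S2

/-- The dimension vector of a subrepresentation. -/
def Sub.dimVec {M : BarbellRep} (L : M.Sub) : ℕ × ℕ := (finrank ℂ L.S1, finrank ℂ L.S2)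

/-- The subrepresentation is nonzero. -/
def Sub.Nonzero {M : BarbellRep} (L : M.Sub) : Prop := L.S1 ≠ ⊥ ∨ L.S2 ≠ ⊥

/-- The subrepresentation is proper. -/
def Sub.Proper {M : BarbellRep} (L : M.Sub) : Prop := L.S1 ≠ ⊤ ∨ L.S2 ≠ ⊤

end BarbellRep

/-- The value of the central charge on a dimension vector in `ℕ²`. -/
def chargeOf (Z : ℤ × ℤ →+ ℂ) (d : ℕ × ℕ) : ℂ := Z ((d.1 : ℤ), (d.2 : ℤ))

/-- A nonzero representation `M` is semistable if `φ(dim L) ≤ φ(dim M)` for every nonzero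
proper subrepresentation `L` of `M`. -/
def IsSemistable (Z : ℤ × ℤ →+ ℂ) (M : BarbellRep) : Prop :=
  M.dimVec ≠ (0, 0) ∧
    ∀ L : M.Sub, L.Nonzero → L.Proper →
      phase (chargeOf Z L.dimVec) ≤ phase (chargeOf Z M.dimVec)

/-- Isomorphism of barbell representations. -/
def RepIso (M N : BarbellRep) : Prop :=
  ∃ (e1 : M.V1 ≃ₗ[ℂ] N.V1) (e2 : M.V2 ≃ₗ[ℂ] N.V2),
    (∀ x, e1 (M.fa x) = N.fa (e1 x)) ∧ (∀ y, e2 (M.fb y) = N.fb (e2 y)) ∧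
      (∀ x, e2 (M.fc x) = N.fc (e1 x))

/-- Componentwise direct sum of barbell representations. -/
def dsum (M N : BarbellRep) : BarbellRep where
  V1 := M.V1 × N.V1
  V2 := M.V2 × N.V2
  fa := M.fa.prodMap N.fa
  fb := M.fb.prodMap N.fb
  fc := M.fc.prodMap N.fc
  rel_a := by
    apply LinearMap.ext
    rintro ⟨x, y⟩
    have h1 := LinearMap.congr_fun M.rel_a x
    have h2 := LinearMap.congr_fun N.rel_a y
    simp only [LinearMap.comp_apply, LinearMap.prodMap_apply, LinearMap.zero_apply] at h1 h2 ⊢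
    simp [h1, h2]
  rel_b := by
    apply LinearMap.ext
    rintro ⟨x, y⟩
    have h1 := LinearMap.congr_fun M.rel_b x
    have h2 := LinearMap.congr_fun N.rel_b y
    simp only [LinearMap.comp_apply, LinearMap.prodMap_apply, LinearMap.zero_apply] at h1 h2 ⊢
    simp [h1, h2]

/-- The zero representation. -/
def zeroRep : BarbellRep where
  V1 := Fin 0 → ℂ
  V2 := Fin 0 → ℂ
  fa := 0
  fb := 0
  fc := 0
  rel_a := by simp
  rel_b := by simp


/-- A nonzero representation `M` is stable if `φ(dim L) < φ(dim M)` for every nonzero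
proper subrepresentation `L` of `M`. -/
def IsStable (Z : ℤ × ℤ →+ ℂ) (M : BarbellRep) : Prop :=
  M.dimVec ≠ (0, 0) ∧
    ∀ L : M.Sub, L.Nonzero → L.Proper →
      phase (chargeOf Z L.dimVec) < phase (chargeOf Z M.dimVec)

/-- The simple representation `S₁ = (ℂ, 0, 0, 0, 0)` at vertex `1`. -/
def S1rep : BarbellRep where
  V1 := ℂ
  V2 := Fin 0 → ℂ
  fa := 0
  fb := 0
  fc := 0
  rel_a := by simp
  rel_b := by simp

/-- The simple representation `S₂ = (0, ℂ, 0, 0, 0)` at vertex `2`. -/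
def S2rep : BarbellRep where
  V1 := Fin 0 → ℂ
  V2 := ℂ
  fa := 0
  fb := 0
  fc := 0
  rel_a := by simp
  rel_b := by simp

theorem aux_arg {z w : ℂ} (hz : z ∈ UpperH) (hw : w ∈ UpperH) (h : phase z < phase w)
    (m n : ℕ) (hm : 0 < m) : phase ((m : ℂ) * z + (n : ℂ) * w) ≤ phase w := by
  have hpi := Real.pi_pos
  have key : ∀ x ∈ UpperH, 0 < Complex.arg x ∧ 0 < ‖x‖ := by
    rintro x ⟨r, p, hr, hp, hp1, rfl⟩
    constructor
    · rw [Complex.arg_real_mul _ hr, Complex.arg_exp_mul_I, (toIocMod_eq_self _).2]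
      · positivity
      · constructor <;> nlinarith
    · simp [hr.ne']
  obtain ⟨hz0, hz1⟩ := key z hz
  obtain ⟨hw0, hw1⟩ := key w hw
  unfold phase at *
  rw [div_lt_div_iff_of_pos_right hpi] at h
  rw [div_le_div_iff_of_pos_right hpi]
  by_contra! hc
  set u := (m : ℂ) * z + (n : ℂ) * w with hu
  have e1 : ∀ x : ℂ, ‖x‖ * Real.sin (x.arg - w.arg)
      = x.im * Real.cos w.arg - x.re * Real.sin w.arg := by
    intro x
    rw [Real.sin_sub, ← Complex.norm_mul_sin_arg x, ← Complex.norm_mul_cos_arg x]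
    ring
  have hU := e1 u
  have hZ := e1 z
  have hW := e1 w
  have hlin : ‖u‖ * Real.sin (u.arg - w.arg) = m * (‖z‖ * Real.sin (z.arg - w.arg)) := by
    rw [sub_self, Real.sin_zero, mul_zero] at hW
    rw [hU, hZ, hu]
    simp
    linear_combination - (n : ℝ) * hW
  have h1 : 0 ≤ Real.sin (u.arg - w.arg) :=
    Real.sin_nonneg_of_nonneg_of_le_pi (by linarith) (by linarith [Complex.arg_le_pi u])
  have h2 : Real.sin (z.arg - w.arg) < 0 :=
    Real.sin_neg_of_neg_of_neg_pi_lt (by linarith) (by linarith [Complex.arg_le_pi w])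
  have h3 : 0 ≤ ‖u‖ * Real.sin (u.arg - w.arg) := by positivity
  have hm' : (0 : ℝ) < m := by exact_mod_cast hm
  have h4 : m * (‖z‖ * Real.sin (z.arg - w.arg)) < 0 :=
    mul_neg_of_pos_of_neg hm' (mul_neg_of_pos_of_neg hz1 h2)
  linarith

theorem aux_charge (Z : ℤ × ℤ →+ ℂ) (m n : ℕ) :
    chargeOf Z (m, n) = (m : ℂ) * Z (1, 0) + (n : ℂ) * Z (0, 1) := by
  have : (((m : ℤ), (n : ℤ)) : ℤ × ℤ) = m • ((1, 0) : ℤ × ℤ) + n • ((0, 1) : ℤ × ℤ) := by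
    ext <;> simp
  unfold chargeOf
  simp only [this]
  rw [map_add, map_nsmul, map_nsmul, nsmul_eq_mul, nsmul_eq_mul]

theorem aux_phase_mul (z : ℂ) (n : ℕ) (hn : 0 < n) : phase ((n : ℂ) * z) = phase z := by
  unfold phase
  have := Complex.arg_real_mul z (r := (n : ℝ)) (by exact_mod_cast hn)
  rw [← this]
  simp

theorem aux_ker {V : Type} [AddCommGroup V] [Module ℂ V] [Nontrivial V] (f : V →ₗ[ℂ] V)
    (hf : f ∘ₗ f = 0) : ∃ v, v ≠ 0 ∧ f v = 0 := by
  obtain ⟨v, hv⟩ := exists_ne (0 : V)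
  by_cases h : f v = 0
  · exact ⟨v, hv, h⟩
  · exact ⟨f v, h, LinearMap.congr_fun hf v⟩

theorem aux_line {V : Type} [AddCommGroup V] [Module ℂ V] (f : V →ₗ[ℂ] V)
    (v : V) (hv : v ≠ 0) (hf : f v = 0) (ht : Submodule.span ℂ {v} = ⊤) :
    finrank ℂ V = 1 ∧ f = 0 := by
  constructor
  · rw [← finrank_top ℂ V, ← ht, finrank_span_singleton hv]
  · ext x
    have hx : x ∈ Submodule.span ℂ {v} := by rw [ht]; trivial
    obtain ⟨c, rfl⟩ := Submodule.mem_span_singleton.1 hx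
    simp [hf]

theorem aux_simple {V : Type} [AddCommGroup V] [Module ℂ V] (e : V ≃ₗ[ℂ] ℂ)
    (S : Submodule ℂ V) (h : S ≠ ⊥) : S = ⊤ := by
  have : IsSimpleModule ℂ V := IsSimpleModule.congr e
  exact (eq_bot_or_eq_top S).resolve_left h

/-- Fix a central charge `Z : ℤ² → ℂ` (values of the standard basis
vectors in `ℍ`) with `φ(1,0) < φ(0,1)`.  A nonzero representation of the barbell quiver with
potential is stable if and only if it is isomorphic to `S₁` or to `S₂`. -/
theorem barbell_stable_iff_simple
    (Z : ℤ × ℤ →+ ℂ)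
    (hZ10 : Z (1, 0) ∈ UpperH) (hZ01 : Z (0, 1) ∈ UpperH)
    (hph : phase (Z (1, 0)) < phase (Z (0, 1))) :
    ∀ M : BarbellRep, M.dimVec ≠ (0, 0) →
      (IsStable Z M ↔ (RepIso M S1rep ∨ RepIso M S2rep)) := by
  intro M hM
  constructor
  · rintro ⟨-, hst⟩
    by_cases h2 : finrank ℂ M.V2 = 0
    · left
      have h1 : 0 < finrank ℂ M.V1 := by
        rcases Nat.eq_zero_or_pos (finrank ℂ M.V1) with h | h
        · exact absurd (by unfold BarbellRep.dimVec; rw [h, h2]) hM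
        · exact h
      have : Nontrivial M.V1 := Module.finrank_pos_iff.1 h1
      have hs2 : Subsingleton M.V2 := Module.finrank_zero_iff.1 h2
      obtain ⟨v, hv, hfv⟩ := aux_ker M.fa M.rel_a
      have htop : Submodule.span ℂ {v} = ⊤ := by
        by_contra hne
        have := hst ⟨Submodule.span ℂ {v}, ⊥, by
            intro x hx
            obtain ⟨c, rfl⟩ := Submodule.mem_span_singleton.1 hx
            simp [hfv], by
            intro y hy
            exact (Submodule.mem_bot ℂ).2 (Subsingleton.elim _ _), by
            intro y hy
            exact (Submodule.mem_bot ℂ).2 (Subsingleton.elim _ _)⟩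
          (Or.inl (by simpa [Submodule.span_singleton_eq_bot] using hv)) (Or.inl hne)
        simp only [BarbellRep.Sub.dimVec, BarbellRep.dimVec, aux_charge, h2,
          finrank_span_singleton hv, finrank_bot] at this
        simp only [Nat.cast_zero, zero_mul, add_zero] at this
        rw [aux_phase_mul _ _ h1, aux_phase_mul _ _ one_pos] at this
        exact lt_irrefl _ this
      obtain ⟨hd, hf⟩ := aux_line M.fa v hv hfv htop
      have e1 : M.V1 ≃ₗ[ℂ] ℂ := LinearEquiv.ofFinrankEq _ _ (by rw [hd]; simp)
      have e2 : M.V2 ≃ₗ[ℂ] (Fin 0 → ℂ) := LinearEquiv.ofFinrankEq _ _ (by rw [h2]; simp)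
      refine ⟨e1, e2, ?_, ?_, ?_⟩
      · intro x
        rw [hf]
        exact map_zero e1
      · intro x
        exact Subsingleton.elim (α := Fin 0 → ℂ) _ _
      · intro x
        exact Subsingleton.elim (α := Fin 0 → ℂ) _ _
    · right
      have h2' : 0 < finrank ℂ M.V2 := Nat.pos_of_ne_zero h2
      have : Nontrivial M.V2 := Module.finrank_pos_iff.1 h2'
      have h1 : finrank ℂ M.V1 = 0 := by
        by_contra h1
        have h1' : 0 < finrank ℂ M.V1 := Nat.pos_of_ne_zero h1
        have : Nontrivial M.V1 := Module.finrank_pos_iff.1 h1'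
        have := hst ⟨⊥, ⊤, by
            intro x hx
            rw [(Submodule.mem_bot ℂ).1 hx]; simp, by simp, by simp⟩
          (Or.inr top_ne_bot) (Or.inl bot_ne_top)
        simp only [BarbellRep.Sub.dimVec, BarbellRep.dimVec, aux_charge,
          finrank_top, finrank_bot] at this
        simp only [Nat.cast_zero, zero_mul, zero_add] at this
        rw [aux_phase_mul _ _ h2'] at this
        exact absurd (aux_arg hZ10 hZ01 hph _ _ h1') (not_le.2 this)
      have hs1 : Subsingleton M.V1 := Module.finrank_zero_iff.1 h1
      obtain ⟨v, hv, hfv⟩ := aux_ker M.fb M.rel_b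
      have htop : Submodule.span ℂ {v} = ⊤ := by
        by_contra hne
        have := hst ⟨⊥, Submodule.span ℂ {v}, by
            intro y hy
            exact (Submodule.mem_bot ℂ).2 (Subsingleton.elim _ _), by
            intro x hx
            obtain ⟨c, rfl⟩ := Submodule.mem_span_singleton.1 hx
            simp [hfv], by
            intro y hy
            rw [(Submodule.mem_bot ℂ).1 hy]; simp⟩
          (Or.inr (by simpa [Submodule.span_singleton_eq_bot] using hv)) (Or.inr hne)
        simp only [BarbellRep.Sub.dimVec, BarbellRep.dimVec, aux_charge, h1,
          finrank_span_singleton hv, finrank_bot] at this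
        simp only [Nat.cast_zero, zero_mul, zero_add] at this
        rw [aux_phase_mul _ _ h2', aux_phase_mul _ _ one_pos] at this
        exact lt_irrefl _ this
      obtain ⟨hd, hf⟩ := aux_line M.fb v hv hfv htop
      have e2 : M.V2 ≃ₗ[ℂ] ℂ := LinearEquiv.ofFinrankEq _ _ (by rw [hd]; simp)
      have e1 : M.V1 ≃ₗ[ℂ] (Fin 0 → ℂ) := LinearEquiv.ofFinrankEq _ _ (by rw [h1]; simp)
      refine ⟨e1, e2, ?_, ?_, ?_⟩
      · intro x
        exact Subsingleton.elim (α := Fin 0 → ℂ) _ _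
      · intro x
        rw [hf]
        exact map_zero e2
      · intro x
        rw [Subsingleton.elim x 0, map_zero]
        exact map_zero e2
  · rintro (⟨e1, e2, -⟩ | ⟨e1, e2, -⟩)
    · refine ⟨hM, fun L hL hP => ?_⟩
      exfalso
      change M.V1 ≃ₗ[ℂ] ℂ at e1
      change M.V2 ≃ₗ[ℂ] (Fin 0 → ℂ) at e2
      have : Subsingleton M.V2 := e2.toEquiv.subsingleton
      have hb : ∀ S T : Submodule ℂ M.V2, S = T := fun S T => Subsingleton.elim _ _
      have h1 := aux_simple e1 L.S1 (hL.resolve_right (fun h => h (hb _ _)))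
      exact hP.elim (fun h => h h1) (fun h => h (hb _ _))
    · refine ⟨hM, fun L hL hP => ?_⟩
      exfalso
      change M.V2 ≃ₗ[ℂ] ℂ at e2
      change M.V1 ≃ₗ[ℂ] (Fin 0 → ℂ) at e1
      have : Subsingleton M.V1 := e1.toEquiv.subsingleton
      have hb : ∀ S T : Submodule ℂ M.V1, S = T := fun S T => Subsingleton.elim _ _
      have h1 := aux_simple e2 L.S2 (hL.resolve_left (fun h => h (hb _ _)))
      exact hP.elim (fun h => h (hb _ _)) (fun h => h h1)
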